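/- If the theory Th(A_P) of a disjoint P-combination A_P of structures A_i (i ∈ I, each in an at most countable language, |I| ≤ ω, A_P infinite) is ω-categorical, then I is finite and each structure A_i is either finite or ω-categorical. -/

import Mathlib

open FirstOrder Language Cardinal

set_option autoImplicit false

/-- The induced structure on a subset of the universe of a structure in a relational language. -/
def subStructure (L : FirstOrder.Language.{0,0}) [L.IsRelational] (M : Type) [L.Structure M]
    (s : Set M) : L.Structure s where
  funMap := fun f _ => isEmptyElim f
  RelMap := fun r x => Structure.RelMap r (fun k => (x k : M))

/-- The complete theory of the induced structure on a subset. -/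
noncomputable def partTheory (L : FirstOrder.Language.{0,0}) [L.IsRelational] (M : Type)
    [L.Structure M] (s : Set M) : L.Theory :=
  @FirstOrder.Language.completeTheory L s (subStructure L M s)

/-- The number of models of `T` of cardinality `κ`, up to isomorphism. -/
noncomputable def numModels (L : FirstOrder.Language.{0,0}) (T : L.Theory) (κ : Cardinal) :
    Cardinal :=
  #(Quot (fun (N N' : {N : FirstOrder.Language.Theory.ModelType.{0,0,0} T // #N.1 = κ}) =>
    Nonempty (N.1 ≃[L] N'.1)))

/-- A theory is ω-categorical if it has exactly one countable model up to isomorphism. -/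
def OmegaCategorical (L : FirstOrder.Language.{0,0}) (T : L.Theory) : Prop :=
  numModels L T ℵ₀ = 1

/-!
By compactness and ω-categoricity, if every tuple of `M` satisfies one of a family of formulas, then
finitely many of these formulas suffice: otherwise some tuple in a countable model avoids all of
them, and this model embeds elementarily in `M`. Applied to the formulas `P i`, which cover `M` and
are disjoint and nonempty, this makes `I` finite.

For the parts, `M` is the disjoint union `A ⊔ C` of `A = P i` and its complement `C`. By a
Feferman–Vaught argument, `A ≡ B` and `C ≡ D` imply `A ⊔ C ≡ B ⊔ D`. Hence two countable models
`B₁`, `B₂` of the theory of `A` yield countable models `B₁ ⊔ D` and `B₂ ⊔ D` of the theory of `M`,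
where `D ≡ C` is countable. These are isomorphic, and the isomorphism preserves `P i`, so it
restricts to an isomorphism of `B₁` and `B₂`.
-/

universe u v w

section Categoricity

theorem omegaCategorical_completeTheory_iff {L : FirstOrder.Language.{0, 0}} {M : Type}
    [L.Structure M] [Infinite M] (hL : L.card ≤ ℵ₀) :
    OmegaCategorical L (L.completeTheory M) ↔
      Categorical (ℵ₀ : Cardinal.{0}) (L.completeTheory M) := by
  have iso_equivalence : Equivalence fun N N' :
      {N : Theory.ModelType.{0, 0, 0} (L.completeTheory M) // #N = ℵ₀} =>
        Nonempty (N.1 ≃[L] N'.1) :=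
    ⟨fun _ => ⟨.refl L _⟩, Nonempty.map .symm, Nonempty.map2 fun e e' => e'.comp e⟩
  obtain ⟨N, hMN, hN⟩ := exists_elementarilyEquivalent_card_eq L M ℵ₀ le_rfl (by simpa using hL)
  have : Nonempty N := hMN.nonempty
  have : N ⊨ L.completeTheory M := hMN.theory_model
  rw [OmegaCategorical, numModels, eq_one_iff_unique]
  constructor
  · rintro ⟨hsub, -⟩ A B hA hB
    exact iso_equivalence.eqvGen_iff.1 <|
      Quot.eqvGen_exact (hsub.elim (Quot.mk _ ⟨A, hA⟩) (Quot.mk _ ⟨B, hB⟩))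
  · intro hcat
    refine ⟨⟨?_⟩, ⟨Quot.mk _ ⟨.of _ N, hN⟩⟩⟩
    rintro ⟨A, hA⟩ ⟨B, hB⟩
    exact Quot.sound (hcat A B hA hB)

variable {L : FirstOrder.Language.{u, v}} {κ : Cardinal.{w}}

theorem elementarilyEquivalent_of_model_completeTheory (M : Type*) [L.Structure M] (N : Type*)
    [L.Structure N] [N ⊨ L.completeTheory M] : M ≅[L] N :=
  elementarilyEquivalent_iff.2 fun φ => (realize_iff_of_model_completeTheory M N φ).symm

theorem forall_realize_iff_of_elementarilyEquivalent {A B : Type*} [L.Structure A]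
    [L.Structure B] (h : A ≅[L] B) {n : ℕ} (φ : L.BoundedFormula Empty n) :
    (∀ x : Fin n → A, φ.Realize default x) ↔ ∀ x : Fin n → B, φ.Realize default x :=
  BoundedFormula.realize_alls.symm.trans
    ((h.realize_sentence φ.alls).trans BoundedFormula.realize_alls)

theorem forall_relMap_iff_of_elementarilyEquivalent {A B : Type*} [L.Structure A]
    [L.Structure B] (h : A ≅[L] B) {n : ℕ} (r : L.Relations n) :
    (∀ x : Fin n → A, Structure.RelMap r x) ↔ ∀ x : Fin n → B, Structure.RelMap r x := by
  simpa [BoundedFormula.realize_rel] using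
    forall_realize_iff_of_elementarilyEquivalent h (r.boundedFormula (&·))

theorem forall_not_relMap_iff_of_elementarilyEquivalent {A B : Type*} [L.Structure A]
    [L.Structure B] (h : A ≅[L] B) {n : ℕ} (r : L.Relations n) :
    (∀ x : Fin n → A, ¬Structure.RelMap r x) ↔ ∀ x : Fin n → B, ¬Structure.RelMap r x := by
  simpa [BoundedFormula.realize_rel] using
    forall_realize_iff_of_elementarilyEquivalent h ∼(r.boundedFormula (&·))

theorem nonempty_equiv_of_categorical {T : L.Theory} (hcat : Categorical κ T) {A B : Type w}
    [L.Structure A] [L.Structure B] [Nonempty A] [Nonempty B] [A ⊨ T] [B ⊨ T]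
    (hA : #A = κ) (hB : #B = κ) : Nonempty (A ≃[L] B) :=
  hcat (.of T A) (.of T B) hA hB

theorem nonempty_elementaryEmbedding_of_categorical {M N : Type w} [L.Structure M] [L.Structure N]
    (hκ : ℵ₀ ≤ κ) (hL : lift.{w} L.card ≤ lift.{max u v} κ)
    (hcat : Categorical κ (L.completeTheory M)) (hM : κ ≤ #M) (hN : #N = κ) (hMN : M ≅[L] N) :
    Nonempty (N ↪ₑ[L] M) := by
  obtain ⟨S, -, hS⟩ := exists_elementarySubstructure_card_eq L (∅ : Set M) κ hκ (by simp) hL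
    (lift_le.2 hM)
  have : Infinite M := infinite_iff.2 (hκ.trans hM)
  have : Infinite S := S.elementarilyEquivalent.symm.infinite
  have : Infinite N := hMN.infinite
  have : S ⊨ L.completeTheory M := S.elementarilyEquivalent.symm.theory_model
  have : N ⊨ L.completeTheory M := hMN.theory_model
  obtain ⟨e⟩ := nonempty_equiv_of_categorical hcat hN (lift_injective hS)
  exact ⟨S.subtype.comp e.toElementaryEmbedding⟩

end Categoricity

section Compactness

theorem exists_elementarilyEquivalent_forall_realize {L : FirstOrder.Language.{u, v}} {M : Type w}
    [L.Structure M] [Nonempty M] {α : Type w} {ι : Type*} {φ : ι → L.Formula α}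
    (h : ∀ s : Finset ι, ∃ x : α → M, ∀ i ∈ s, (φ i).Realize x) :
    ∃ (N : Theory.ModelType.{u, v, max u v w} (L.completeTheory M)) (x : α → N),
      ∀ i, (φ i).Realize x := by
  let T := L.completeTheory M
  let T' : Option ι → L[[α]].Theory := fun o =>
    o.elim ((L.lhomWithConstants α).onTheory T) fun i => {Formula.equivSentence (φ i)}
  have satisfiable : Theory.IsSatisfiable (⋃ o, T' o) := by
    refine Theory.isSatisfiable_iUnion_iff_isSatisfiable_iUnion_finset T' |>.2 fun s => ?_
    obtain ⟨x, hx⟩ := h s.eraseNone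
    refine (T.typeOf x).isMaximal.1.mono (Set.iUnion₂_subset ?_)
    rintro (_ | i) hi
    · exact (T.typeOf x).subset
    · exact Set.singleton_subset_iff.2 <|
        Theory.CompleteType.formula_mem_typeOf.2 (hx i (Finset.mem_eraseNone.2 hi))
  rw [Set.iUnion_option] at satisfiable
  obtain ⟨p, hp⟩ := Set.nonempty_iff_ne_empty.2 <|
    (Theory.CompleteType.setOfPred_subset_eq_empty_iff _).not_left.2 satisfiable
  obtain ⟨N, x, rfl⟩ := T.exists_modelType_is_realized_in p
  exact ⟨N, x, fun i => Theory.CompleteType.formula_mem_typeOf.1 <|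
    hp (Set.mem_iUnion_of_mem i rfl)⟩

theorem exists_finset_forall_exists_realize {L : FirstOrder.Language.{0, 0}} {M : Type}
    [L.Structure M] [Infinite M] (hL : L.card ≤ ℵ₀)
    (hcat : Categorical (ℵ₀ : Cardinal.{0}) (L.completeTheory M))
    {α : Type} [Countable α] {ι : Type*} {φ : ι → L.Formula α}
    (h : ∀ x : α → M, ∃ i, (φ i).Realize x) :
    ∃ s : Finset ι, ∀ x : α → M, ∃ i ∈ s, (φ i).Realize x := by
  by_contra! finitely_avoidable
  obtain ⟨N, y, hy⟩ := exists_elementarilyEquivalent_forall_realize (φ := fun i => ∼(φ i))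
    finitely_avoidable
  have hMN : M ≅[L] N := elementarilyEquivalent_of_model_completeTheory M N
  have : Infinite N := hMN.infinite
  obtain ⟨S, hyS, hS⟩ := exists_elementarySubstructure_card_eq L (Set.range y) (ℵ₀ : Cardinal.{0})
    le_rfl (by simpa only [lift_id] using (Set.countable_range y).le_aleph0) (by simpa using hL)
    (by simp)
  obtain ⟨f⟩ := nonempty_elementaryEmbedding_of_categorical le_rfl (by simpa using hL) hcat
    (aleph0_le_mk M) (lift_injective hS) (hMN.trans S.elementarilyEquivalent.symm)
  let z : α → S := fun a => ⟨y a, hyS (Set.mem_range_self a)⟩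
  obtain ⟨i, hi⟩ := h (f ∘ z)
  exact hy i ((S.subtype.map_formula (φ i) z).2 ((f.map_formula (φ i) z).1 hi))

end Compactness

section DisjointUnion

variable {L : FirstOrder.Language.{u, v}} [L.IsRelational] {A B C D : Type w}
  [L.Structure A] [L.Structure B] [L.Structure C] [L.Structure D]

/-- The disjoint union of two structures in a relational language: no relation links the two
summands. A nullary relation symbol holds in it as soon as it holds in one of the summands. -/
@[reducible] def disjointUnion (L : FirstOrder.Language.{u, v}) [L.IsRelational] (A C : Type w)
    [L.Structure A] [L.Structure C] : L.Structure (A ⊕ C) where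
  funMap f _ := isEmptyElim f
  RelMap r x := (∃ y, x = Sum.inl ∘ y ∧ Structure.RelMap r y) ∨
    ∃ y, x = Sum.inr ∘ y ∧ Structure.RelMap r y

attribute [local instance] disjointUnion

/-- The tuple of `A ⊕ C` whose `k`-th entry is `c` if `σ k = some c`, and `x k` otherwise. It
presents the tuples of a disjoint union as tuples of `A` some of whose entries are overridden by
fixed elements of `C`. -/
def patch {ι : Type*} (σ : ι → Option C) (x : ι → A) : ι → A ⊕ C :=
  fun k => (σ k).elim (Sum.inl (x k)) Sum.inr

theorem sumElim_patch {ι κ : Type*} (σ : ι → Option C) (τ : κ → Option C) (x : ι → A)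
    (y : κ → A) :
    Sum.elim (patch σ x) (patch τ y) = patch (Sum.elim σ τ) (Sum.elim x y) := by
  ext (k | k) <;> rfl

theorem snoc_patch_inl {n : ℕ} (σ : Fin n → Option C) (x : Fin n → A) (a : A) :
    (Fin.snoc (patch σ x) (Sum.inl a) : Fin (n + 1) → A ⊕ C) =
      patch (Fin.snoc σ none : Fin (n + 1) → Option C) (Fin.snoc x a : Fin (n + 1) → A) := by
  funext k
  cases k using Fin.lastCases <;> simp [patch]

theorem snoc_patch_inr {n : ℕ} (σ : Fin n → Option C) (x : Fin n → A) (a : A) (c : C) :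
    (Fin.snoc (patch σ x) (Sum.inr c) : Fin (n + 1) → A ⊕ C) =
      patch (Fin.snoc σ (some c) : Fin (n + 1) → Option C) (Fin.snoc x a : Fin (n + 1) → A) := by
  funext k
  cases k using Fin.lastCases <;> simp [patch]

theorem patch_eq_inl_comp_iff {ι : Type*} {σ : ι → Option C} {x y : ι → A} :
    patch σ x = Sum.inl ∘ y ↔ (∀ k, σ k = none) ∧ x = y := by
  rw [funext_iff, funext_iff, ← forall_and]
  refine forall_congr' fun k => ?_
  cases h : σ k <;> simp [patch, h]

theorem patch_eq_inr_comp_iff {ι : Type*} {σ : ι → Option C} {x : ι → A} {y : ι → C} :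
    patch σ x = Sum.inr ∘ y ↔ ∀ k, σ k = some (y k) := by
  rw [funext_iff]
  refine forall_congr' fun k => ?_
  cases h : σ k <;> simp [patch, h]

theorem patch_apply_eq_patch_apply_iff {ι : Type*} {σ : ι → Option C} {x : ι → A} {i j : ι} :
    patch σ x i = patch σ x j ↔
      (σ i = none ∧ σ j = none) ∧ x i = x j ∨ ∃ c, σ i = some c ∧ σ j = some c := by
  cases hi : σ i <;> cases hj : σ j <;> simp [patch, hi, hj, eq_comm]

theorem relMap_patch {n : ℕ} {r : L.Relations n} {σ : Fin n → Option C} {x : Fin n → A} :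
    Structure.RelMap r (patch σ x) ↔
      (∀ k, σ k = none) ∧ Structure.RelMap r x ∨
        ∃ y, (∀ k, σ k = some (y k)) ∧ Structure.RelMap r y := by
  refine or_congr ?_ (exists_congr fun y => and_congr_left' patch_eq_inr_comp_iff)
  simp only [patch_eq_inl_comp_iff, and_assoc, exists_and_left, exists_eq_left']

theorem exists_term_eq_var {α : Type*} (t : L.Term α) : ∃ k, t = .var k := by
  cases t with
  | var k => exact ⟨k, rfl⟩
  | func f _ => exact isEmptyElim f

/-- The family `f` is a left trace of `φ` (with the free variables in `α` patched by `σ`) if `f τ`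
defines, in every nonempty `A`, the tuples whose patch by `τ` satisfies `φ` in `A ⊕ C`. It may take
only finitely many values, so that a quantifier over the possibly infinite structure `C` becomes a
finite conjunction. -/
structure IsLeftTrace {α : Type*} {n : ℕ} (σ : α → Option C) (φ : L.BoundedFormula α n)
    (f : (Fin n → Option C) → L.BoundedFormula α n) : Prop where
  finite_range : (Set.range f).Finite
  realize_iff : ∀ (τ : Fin n → Option C) (A : Type w) [L.Structure A] [Nonempty A] (v : α → A)
    (x : Fin n → A), (f τ).Realize v x ↔ φ.Realize (patch σ v) (patch τ x)

variable {α : Type*} {n : ℕ} {σ : α → Option C}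

theorem exists_isLeftTrace_of_realize_iff {φ : L.BoundedFormula α n}
    (p q : (Fin n → Option C) → Prop)
    (h : ∀ (τ : Fin n → Option C) (A : Type w) [L.Structure A] (v : α → A) (x : Fin n → A),
      φ.Realize (patch σ v) (patch τ x) ↔ p τ ∧ φ.Realize v x ∨ q τ) :
    ∃ f, IsLeftTrace σ φ f := by
  classical
  let truth : Prop → L.BoundedFormula α n := fun a => if a then ⊤ else ⊥
  let g : Prop × Prop → L.BoundedFormula α n := fun a => truth a.1 ⊓ φ ⊔ truth a.2
  refine ⟨fun τ => g (p τ, q τ), (Set.finite_range g).subset (Set.range_comp_subset_range _ g), ?_⟩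
  intro τ A _ _ v x
  rw [h]
  by_cases hp : p τ <;> by_cases hq : q τ <;> simp [g, truth, hp, hq]

theorem exists_isLeftTrace_equal (t₁ t₂ : L.Term (α ⊕ Fin n)) :
    ∃ f, IsLeftTrace σ (.equal t₁ t₂) f := by
  obtain ⟨i, rfl⟩ := exists_term_eq_var t₁
  obtain ⟨j, rfl⟩ := exists_term_eq_var t₂
  refine exists_isLeftTrace_of_realize_iff
    (fun τ => Sum.elim σ τ i = none ∧ Sum.elim σ τ j = none)
    (fun τ => ∃ c, Sum.elim σ τ i = some c ∧ Sum.elim σ τ j = some c) fun τ A _ v x => ?_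
  simp only [BoundedFormula.Realize, Term.realize_var, sumElim_patch]
  exact patch_apply_eq_patch_apply_iff

theorem exists_isLeftTrace_rel {l : ℕ} (r : L.Relations l) (ts : Fin l → L.Term (α ⊕ Fin n)) :
    ∃ f, IsLeftTrace σ (.rel r ts) f := by
  choose k hk using fun i => exists_term_eq_var (ts i)
  obtain rfl : ts = fun i => .var (k i) := funext hk
  refine exists_isLeftTrace_of_realize_iff
    (fun τ => ∀ i, Sum.elim σ τ (k i) = none)
    (fun τ => ∃ y : Fin l → C, (∀ i, Sum.elim σ τ (k i) = some (y i)) ∧ Structure.RelMap r y)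
    fun τ A _ v x => ?_
  simp only [BoundedFormula.Realize, Term.realize_var, sumElim_patch]
  exact relMap_patch (σ := Sum.elim σ τ ∘ k) (x := Sum.elim v x ∘ k)

theorem IsLeftTrace.imp {φ ψ : L.BoundedFormula α n}
    {f g : (Fin n → Option C) → L.BoundedFormula α n}
    (hf : IsLeftTrace σ φ f) (hg : IsLeftTrace σ ψ g) :
    IsLeftTrace σ (φ.imp ψ) fun τ => (f τ).imp (g τ) where
  finite_range := by
    refine (hf.finite_range.image2 .imp hg.finite_range).subset ?_
    rintro _ ⟨τ, rfl⟩
    exact Set.mem_image2_of_mem (Set.mem_range_self τ) (Set.mem_range_self τ)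
  realize_iff τ A _ _ v x := by
    simp only [BoundedFormula.realize_imp, hf.realize_iff, hg.realize_iff]

theorem IsLeftTrace.exists_all {φ : L.BoundedFormula α (n + 1)}
    {f : (Fin (n + 1) → Option C) → L.BoundedFormula α (n + 1)} (hf : IsLeftTrace σ φ f) :
    ∃ g, IsLeftTrace σ φ.all g := by
  have : Finite (Set.range f) := hf.finite_range
  let conj : Set (Set.range f) → L.BoundedFormula α n := fun S =>
    (BoundedFormula.iInf fun b : S => b.1.1).all
  let extensions : (Fin n → Option C) → Set (Set.range f) := fun τ =>
    Set.range fun o : Option C => ⟨f (Fin.snoc τ o), Set.mem_range_self _⟩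
  refine ⟨fun τ => conj (extensions τ),
    (Set.finite_range conj).subset (Set.range_comp_subset_range _ conj), ?_⟩
  intro τ A _ ⟨a₀⟩ v x
  have : Nonempty A := ⟨a₀⟩
  calc
    (conj (extensions τ)).Realize v x ↔
        ∀ (a : A) (o : Option C), (f (Fin.snoc τ o)).Realize v (Fin.snoc x a) := by
      simp [conj, extensions]
    _ ↔ ∀ z : A ⊕ C, φ.Realize (patch σ v) (Fin.snoc (patch τ x) z) := by
      simp only [hf.realize_iff, Option.forall, Sum.forall, ← snoc_patch_inl,
        ← snoc_patch_inr, forall_and, forall_const]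
    _ ↔ φ.all.Realize (patch σ v) (patch τ x) := Iff.rfl

theorem exists_isLeftTrace (σ : α → Option C) (φ : L.BoundedFormula α n) :
    ∃ f, IsLeftTrace σ φ f := by
  induction φ with
  | falsum =>
    exact exists_isLeftTrace_of_realize_iff (fun _ => False) (fun _ => False)
      fun _ _ _ _ _ => by simp [BoundedFormula.Realize]
  | equal t₁ t₂ => exact exists_isLeftTrace_equal t₁ t₂
  | rel r ts => exact exists_isLeftTrace_rel r ts
  | imp φ ψ ihφ ihψ =>
    obtain ⟨f, hf⟩ := ihφ
    obtain ⟨g, hg⟩ := ihψ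
    exact ⟨_, hf.imp hg⟩
  | all φ ih =>
    obtain ⟨f, hf⟩ := ih
    exact hf.exists_all

theorem elementarilyEquivalent_sum_left [Nonempty A] (h : A ≅[L] B) : (A ⊕ C) ≅[L] (B ⊕ C) := by
  have : Nonempty B := h.nonempty
  rw [elementarilyEquivalent_iff]
  intro φ
  obtain ⟨f, hf⟩ := exists_isLeftTrace (default : Empty → Option C) φ
  have realize_iff (N : Type w) [L.Structure N] [Nonempty N] :
      N ⊨ f default ↔ (N ⊕ C) ⊨ φ := by
    have := hf.realize_iff default N default default
    rwa [Subsingleton.elim (patch _ _) default, Subsingleton.elim (patch _ _) default] at this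
  exact (realize_iff A).symm.trans ((h.realize_sentence (f default)).trans (realize_iff B))

/-- The isomorphism swapping the summands of a disjoint union. -/
def disjointUnionComm (L : FirstOrder.Language.{u, v}) [L.IsRelational] (A C : Type w)
    [L.Structure A] [L.Structure C] : (A ⊕ C) ≃[L] (C ⊕ A) where
  toEquiv := Equiv.sumComm A C
  map_fun' f _ := isEmptyElim f
  map_rel' _ x := or_comm.trans <|
    or_congr (exists_congr fun _ => and_congr_left' (Equiv.symm_comp_eq (Equiv.sumComm C A) _ x))
      (exists_congr fun _ => and_congr_left' (Equiv.symm_comp_eq (Equiv.sumComm C A) _ x))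

theorem elementarilyEquivalent_sum_right [Nonempty A] (h : A ≅[L] B) :
    (C ⊕ A) ≅[L] (C ⊕ B) :=
  (StrongHomClass.elementarilyEquivalent (disjointUnionComm L C A)).trans
    ((elementarilyEquivalent_sum_left h).trans
      (StrongHomClass.elementarilyEquivalent (disjointUnionComm L B C)))

theorem relMap_inl_comp_iff {n : ℕ} {r : L.Relations (n + 1)} {x : Fin (n + 1) → A} :
    Structure.RelMap r (Sum.inl ∘ x : Fin (n + 1) → A ⊕ C) ↔ Structure.RelMap r x := by
  constructor
  · rintro (⟨y, hxy, hy⟩ | ⟨y, hxy, -⟩)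
    · rwa [Sum.inl_injective.comp_left hxy]
    · exact absurd (congrFun hxy 0) Sum.inl_ne_inr
  · exact fun hx => Or.inl ⟨x, rfl, hx⟩

theorem relMap_iff_isLeft {p : L.Relations 1} (hA : ∀ x : Fin 1 → A, Structure.RelMap p x)
    (hC : ∀ x : Fin 1 → C, ¬Structure.RelMap p x) (z : Fin 1 → A ⊕ C) :
    Structure.RelMap p z ↔ (z 0).isLeft := by
  constructor
  · rintro (⟨y, rfl, -⟩ | ⟨y, -, hy⟩)
    · rfl
    · exact absurd hy (hC y)
  · intro hz
    obtain ⟨a, ha⟩ := Sum.isLeft_iff.1 hz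
    exact Or.inl ⟨fun _ => a, (eq_const_of_unique z).trans (funext fun _ => ha), hA _⟩

theorem nonempty_equiv_left_of_equiv_sum (g : (A ⊕ C) ≃[L] (B ⊕ D))
    (hg : ∀ z, (g z).isLeft = z.isLeft)
    (h₀ : ∀ r : L.Relations 0, Structure.RelMap r (default : Fin 0 → A) ↔
      Structure.RelMap r (default : Fin 0 → B)) :
    Nonempty (A ≃[L] B) := by
  let e : A ≃ B := (Equiv.sumIsLeft (β := C)).symm.trans <|
    (g.toEquiv.subtypeEquiv fun z => by rw [← hg z]; rfl).trans Equiv.sumIsLeft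
  have g_inl (a : A) : g (Sum.inl a) = Sum.inl (e a) := (Sum.inl_getLeft _ _).symm
  refine ⟨⟨e, fun f _ => isEmptyElim f, fun {n} r x => ?_⟩⟩
  cases n with
  | zero => simpa only [Subsingleton.elim _ default] using (h₀ r).symm
  | succ n =>
    rw [← relMap_inl_comp_iff (A := A) (C := C), ← g.map_rel, ← relMap_inl_comp_iff (C := D)]
    exact iff_of_eq (congrArg _ (funext fun i => (g_inl (x i)).symm))

theorem exists_mk_le_elementarilyEquivalent_sum {κ : Cardinal.{w}} (hκ : ℵ₀ ≤ κ)
    (hL : lift.{w} L.card ≤ lift.{max u v} κ) (A C : Type w) [L.Structure A] [L.Structure C] :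
    ∃ (D : Type w) (_ : L.Structure D), #D ≤ κ ∧ (C ≅[L] D) ∧ ((A ⊕ C) ≅[L] (A ⊕ D)) := by
  rcases finite_or_infinite C with hC | hC
  · exact ⟨C, inferInstance, mk_le_aleph0.trans hκ, rfl, rfl⟩
  · obtain ⟨D, hCD, hD⟩ := exists_elementarilyEquivalent_card_eq L C κ hκ hL
    exact ⟨D, inferInstance, hD.le, hCD, elementarilyEquivalent_sum_right hCD⟩

theorem categorical_left_of_categorical_sum {κ : Cardinal.{w}} (hκ : ℵ₀ ≤ κ)
    (hL : lift.{w} L.card ≤ lift.{max u v} κ) {p : L.Relations 1}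
    (hA : ∀ x : Fin 1 → A, Structure.RelMap p x) (hC : ∀ x : Fin 1 → C, ¬Structure.RelMap p x)
    (hcat : Categorical κ (L.completeTheory (A ⊕ C))) : Categorical κ (L.completeTheory A) := by
  intro N N' hN hN'
  have hAN : A ≅[L] N := elementarilyEquivalent_of_model_completeTheory A N
  have hAN' : A ≅[L] N' := elementarilyEquivalent_of_model_completeTheory A N'
  have : Nonempty A := hAN.symm.nonempty
  obtain ⟨D, _, hD, hCD, hACD⟩ := exists_mk_le_elementarilyEquivalent_sum hκ hL A C
  have : (N ⊕ D) ⊨ L.completeTheory (A ⊕ C) :=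
    (hACD.trans (elementarilyEquivalent_sum_left hAN)).theory_model
  have : (N' ⊕ D) ⊨ L.completeTheory (A ⊕ C) :=
    (hACD.trans (elementarilyEquivalent_sum_left hAN')).theory_model
  obtain ⟨g⟩ : Nonempty ((N ⊕ D) ≃[L] (N' ⊕ D)) := nonempty_equiv_of_categorical hcat
    (by rw [mk_sum, lift_id, lift_id, hN, add_eq_left hκ hD])
    (by rw [mk_sum, lift_id, lift_id, hN', add_eq_left hκ hD])
  have hpD : ∀ x : Fin 1 → D, ¬Structure.RelMap p x :=
    (forall_not_relMap_iff_of_elementarilyEquivalent hCD p).1 hC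
  have relMap_iff_isLeft_sum {N : Type w} [L.Structure N] (h : A ≅[L] N) (z : N ⊕ D) :
      Structure.RelMap p (fun _ => z) ↔ z.isLeft :=
    relMap_iff_isLeft ((forall_relMap_iff_of_elementarilyEquivalent h p).1 hA) hpD _
  refine nonempty_equiv_left_of_equiv_sum g (fun z => Bool.eq_iff_iff.2 ?_) fun r => ?_
  · rw [← relMap_iff_isLeft_sum hAN, ← relMap_iff_isLeft_sum hAN', ← g.map_rel]
    rfl
  · simpa only [Unique.forall_iff] using
      forall_relMap_iff_of_elementarilyEquivalent (hAN.symm.trans hAN') r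

end DisjointUnion

section InducedStructure

variable {L : FirstOrder.Language.{0, 0}} [L.IsRelational] {M : Type} [L.Structure M]

attribute [local instance] disjointUnion

local instance (s : Set M) : L.Structure s := subStructure L M s

theorem nonempty_equiv_sum_compl {s : Set M}
    (hs : ∀ (n : ℕ) (r : L.Relations n) (x : Fin n → M),
      Structure.RelMap r x → (∀ k, x k ∈ s) ∨ ∀ k, x k ∉ s) :
    Nonempty ((s ⊕ (sᶜ : Set M)) ≃[L] M) := by
  classical
  let e : s ⊕ (sᶜ : Set M) ≃ M := Equiv.Set.sumCompl s
  refine ⟨⟨e, fun f _ => isEmptyElim f, fun {n} r x => ⟨fun h => ?_, ?_⟩⟩⟩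
  · rcases hs n r _ h with hx | hx
    · exact Or.inl ⟨fun k => ⟨e (x k), hx k⟩, funext fun k => e.injective (by simp [e]), h⟩
    · exact Or.inr ⟨fun k => ⟨e (x k), hx k⟩, funext fun k => e.injective (by simp [e]), h⟩
  · rintro (⟨y, rfl, h⟩ | ⟨y, rfl, h⟩) <;> exact h

theorem omegaCategorical_partTheory (hL : L.card ≤ ℵ₀) (p : L.Relations 1)
    (hp : ∀ (n : ℕ) (r : L.Relations n) (x : Fin n → M), Structure.RelMap r x →
      (∀ k, Structure.RelMap p ![x k]) ∨ ∀ k, ¬Structure.RelMap p ![x k])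
    (hinf : {a : M | Structure.RelMap p ![a]}.Infinite)
    (hcat : Categorical (ℵ₀ : Cardinal.{0}) (L.completeTheory M)) :
    OmegaCategorical L (partTheory L M {a : M | Structure.RelMap p ![a]}) := by
  set s : Set M := {a : M | Structure.RelMap p ![a]}
  have : Infinite s := hinf.to_subtype
  obtain ⟨e⟩ := nonempty_equiv_sum_compl (s := s) hp
  have hcat_sum : Categorical (ℵ₀ : Cardinal.{0}) (L.completeTheory (s ⊕ (sᶜ : Set M))) := by
    rwa [(StrongHomClass.elementarilyEquivalent e).completeTheory_eq]
  have relMap_iff_mem (t : Set M) (x : Fin 1 → t) : Structure.RelMap p x ↔ (x 0 : M) ∈ s := by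
    have coe_comp_eq : (fun k => (x k : M)) = ![(x 0 : M)] := by
      ext k
      rw [Subsingleton.elim k 0, Matrix.cons_val_zero]
    exact iff_of_eq (congrArg (Structure.RelMap p) coe_comp_eq)
  exact (omegaCategorical_completeTheory_iff hL).2 <|
    categorical_left_of_categorical_sum le_rfl (by simpa using hL)
      (fun x => (relMap_iff_mem s x).2 (x 0).2) (fun x => (relMap_iff_mem sᶜ x).not.2 (x 0).2)
      hcat_sum

end InducedStructure

theorem finite_index_of_categorical {L : FirstOrder.Language.{0, 0}} {M : Type} [L.Structure M]
    [Infinite M] (hL : L.card ≤ ℵ₀) (hcat : Categorical (ℵ₀ : Cardinal.{0}) (L.completeTheory M))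
    {ι : Type*} {P : ι → L.Relations 1}
    (hdisj : ∀ i j, i ≠ j → ∀ a : M,
      ¬(Structure.RelMap (P i) ![a] ∧ Structure.RelMap (P j) ![a]))
    (hne : ∀ i, ∃ a : M, Structure.RelMap (P i) ![a])
    (hcover : ∀ a : M, ∃ i, Structure.RelMap (P i) ![a]) : Finite ι := by
  let φ : ι → L.Formula (Fin 1) := fun i => (P i).formula₁ (.var 0)
  have realize_iff (i : ι) (x : Fin 1 → M) :
      (φ i).Realize x ↔ Structure.RelMap (P i) ![x 0] := Formula.realize_rel₁
  obtain ⟨s, hs⟩ := exists_finset_forall_exists_realize hL hcat (φ := φ)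
    (by simpa only [realize_iff] using fun x : Fin 1 → M => hcover (x 0))
  refine Set.finite_univ_iff.1 (s.finite_toSet.subset fun i _ => ?_)
  obtain ⟨a, ha⟩ := hne i
  obtain ⟨j, hj, haj⟩ := hs ![a]
  obtain rfl : i = j := by
    by_contra hij
    exact hdisj i j hij a ⟨ha, (realize_iff j ![a]).1 haj⟩
  exact hj

/-- if the theory of a disjoint `P`-combination (an infinite structure `M` covered
by pairwise disjoint unary predicates `P i`, `i ∈ I`, with no relations linking distinct parts,
in an at most countable language, with `|I| ≤ ω`) is ω-categorical, then `I` is finite and each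
part is finite or ω-categorical. -/
theorem stmt1 (L : FirstOrder.Language.{0,0}) [L.IsRelational] (M : Type) [L.Structure M]
    (I : Type) (P : I → L.Relations 1)
    (hctbl : Countable I)
    (hcard : L.card ≤ ℵ₀)
    (hdisj : ∀ i j : I, i ≠ j → ∀ a : M,
      ¬ (Structure.RelMap (P i) ![a] ∧ Structure.RelMap (P j) ![a]))
    (hne : ∀ i : I, ∃ a : M, Structure.RelMap (P i) ![a])
    (hcover : ∀ a : M, ∃ i : I, Structure.RelMap (P i) ![a])
    (hnocross : ∀ (n : ℕ) (r : L.Relations n) (x : Fin n → M),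
      Structure.RelMap r x → ∃ i : I, ∀ k : Fin n, Structure.RelMap (P i) ![x k])
    (hinf : Infinite M)
    (hcat : OmegaCategorical L (L.completeTheory M)) :
    Finite I ∧ ∀ i : I,
      Set.Finite {a : M | Structure.RelMap (P i) ![a]} ∨
        OmegaCategorical L (partTheory L M {a : M | Structure.RelMap (P i) ![a]}) := by
  have hcat' := (omegaCategorical_completeTheory_iff hcard).1 hcat
  refine ⟨finite_index_of_categorical hcard hcat' hdisj hne hcover, fun i => ?_⟩
  refine or_iff_not_imp_left.2 fun hpart => omegaCategorical_partTheory hcard (P i) ?_ hpart hcat'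
  intro n r x hx
  obtain ⟨j, hj⟩ := hnocross n r x hx
  rcases eq_or_ne i j with rfl | hij
  · exact Or.inl hj
  · exact Or.inr fun k hk => hdisj i j hij (x k) ⟨hk, hj k⟩
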